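/- Let ν be an arbitrary probability measure on 𝕋 and, for κ > 1/π, let ν_κ be its triangular-kernel regularization and U_{2,κ} the associated potential. Consider the generator L_{α,β,κ}f(x) := ½ f''(x) + α^{−1} ∫_𝕋 [f(x + αβ·⟨y−x⟩) − f(x)] ν_κ(y) λ(dy) and the Gibbs measure μ_{β,κ} with density exp(−βU_{2,κ})/Z_{β,κ} with respect to λ. Then there exists a universal constant C₁ > 0 such that for every β ≥ 1, every κ ≥ 1 and every α ∈ (0, min((2β)^{−1}, (β³(β+κ))^{−1/2})) there exists a bounded measurable function h : 𝕋 → ℝ with ∫_𝕋 L_{α,β,κ}φ dμ_{β,κ} = ∫_𝕋 φ·h dμ_{β,κ} for all φ ∈ C²(𝕋), and with ess sup_x |h(x)| ≤ C₁ αβ²(β² + κ²). -/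

import Mathlib

open MeasureTheory Real Set Filter

noncomputable section

instance : Fact (0 < 2 * π) := ⟨Real.two_pi_pos⟩

/-- The circle `𝕋 = ℝ/(2πℤ)`. -/
abbrev 𝕋 : Type := AddCircle (2 * π)

/-- The normalized Haar probability measure `λ` on the circle. -/
def lam : Measure 𝕋 := (ENNReal.ofReal (2 * π))⁻¹ • volume

/-- The representative of a point of the circle in `(-π, π]`. -/
def rep (z : 𝕋) : ℝ := ((AddCircle.equivIoc (2 * π) (-π) z : Set.Ioc (-π) (-π + 2 * π)) : ℝ)

/-- The triangular-kernel regularization of `ν`: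
`ν_κ(z) = 2πκ ∫ (1 - κ d(y,z))₊ ν(dy)`, a density w.r.t. `λ`. -/
def nuk (ν : Measure 𝕋) (κ : ℝ) (z : 𝕋) : ℝ := 2 * π * κ * ∫ y, max (1 - κ * dist y z) 0 ∂ν

/-- The regularized potential `U_{2,κ}(x) = ∫ d(x,y)² ν_κ(y) λ(dy)`. -/
def U2k (ν : Measure 𝕋) (κ : ℝ) (x : 𝕋) : ℝ := ∫ y, dist x y ^ 2 * nuk ν κ y ∂lam

/-- The normalizing constant `Z_{β,κ} = ∫ exp(-β U_{2,κ}) dλ`. -/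
def Z2k (ν : Measure 𝕋) (κ β : ℝ) : ℝ := ∫ x, Real.exp (-β * U2k ν κ x) ∂lam

/-- The Gibbs measure `μ_{β,κ}` with density `exp(-β U_{2,κ})/Z_{β,κ}` w.r.t. `λ`. -/
def gibbs2k (ν : Measure 𝕋) (κ β : ℝ) : Measure 𝕋 :=
  lam.withDensity fun x => ENNReal.ofReal (Real.exp (-β * U2k ν κ x) / Z2k ν κ β)

/-- The regularized generator for `p = 2`, acting on (the periodic lift) `φ` of a `C²` function:
`L_{α,β,κ}φ(x) = ½ φ''(x) + α⁻¹ ∫ [φ(x + αβ⟨y-x⟩) - φ(x)] ν_κ(y) λ(dy)`. -/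
def gen2k (ν : Measure 𝕋) (κ α β : ℝ) (φ : ℝ → ℝ) (z : 𝕋) : ℝ :=
  (1 / 2) * deriv (deriv φ) (rep z)
    + α⁻¹ * ∫ y, (φ (rep z + α * β * rep (y - z)) - φ (rep z)) * nuk ν κ y ∂lam

section helpers
open Function

lemma swapII (F : ℝ → ℝ → ℝ) (hF : Continuous (uncurry F)) (a b c d : ℝ) (hab : a ≤ b) (hcd : c ≤ d) :
    ∫ x in a..b, ∫ t in c..d, F x t = ∫ t in c..d, ∫ x in a..b, F x t := by
  simp only [intervalIntegral.integral_of_le hab, intervalIntegral.integral_of_le hcd]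
  apply integral_integral_swap
  rw [Measure.prod_restrict]
  apply IntegrableOn.mono_set (t := Icc a b ×ˢ Icc c d)
  · exact hF.continuousOn.integrableOn_compact (isCompact_Icc.prod isCompact_Icc)
  · exact prod_mono Ioc_subset_Icc_self Ioc_subset_Icc_self

structure GD (g : ℝ → ℝ) (κ : ℝ) : Prop where
  per : Periodic g (2 * π)
  cont : Continuous g
  lip : ∀ x y, |g x - g y| ≤ 2 * π * κ ^ 2 * |x - y|
  nonneg : ∀ x, 0 ≤ g x
  le : ∀ x, g x ≤ 2 * π * κ
  int : ∫ x in (-π)..π, g x = 2 * π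
  one : 1 ≤ κ

def mm (g : ℝ → ℝ) (x : ℝ) : ℝ := (2 * π)⁻¹ * ∫ t in (-π)..π, t * g (x + t)
def uu (g : ℝ → ℝ) (x : ℝ) : ℝ := (2 * π)⁻¹ * ∫ t in (-π)..π, t ^ 2 * g (x + t)

lemma GD.shift_int {g κ} (h : GD g κ) (x : ℝ) : ∫ t in (-π)..π, g (x + t) = 2 * π := by
  rw [intervalIntegral.integral_comp_add_left, ← h.int]
  have := h.per.intervalIntegral_add_eq (x + -π) (-π)
  convert this using 2 <;> ring

lemma int_window_deriv (k : ℝ → ℝ) (hk : Continuous k) (x : ℝ) :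
    HasDerivAt (fun x => ∫ w in (x - π)..(x + π), k w) (k (x + π) - k (x - π)) x := by
  have e : (fun x => ∫ w in (x - π)..(x + π), k w)
      = fun x => (∫ w in (0:ℝ)..(x + π), k w) - ∫ w in (0:ℝ)..(x - π), k w := by
    funext x
    rw [intervalIntegral.integral_interval_sub_left] <;> exact hk.intervalIntegrable _ _
  rw [e]
  have h0 : ∀ y, HasDerivAt (fun x => ∫ w in (0:ℝ)..x, k w) (k y) y := fun y =>
    intervalIntegral.integral_hasDerivAt_right (hk.intervalIntegrable _ _)
      hk.stronglyMeasurable.stronglyMeasurableAtFilter hk.continuousAt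
  exact ((h0 (x + π)).comp_add_const x π).sub ((h0 (x - π)).comp_sub_const x π)

lemma GD.mm_deriv {g κ} (h : GD g κ) (x : ℝ) : HasDerivAt (mm g) (g (x + π) - 1) x := by
  have hc := h.cont
  have e : mm g = fun x => (2 * π)⁻¹ * (∫ w in (x - π)..(x + π), w * g w) - x := by
    funext y
    have e1 : ∫ t in (-π)..π, t * g (y + t)
        = (∫ t in (-π)..π, (y + t) * g (y + t)) - y * ∫ t in (-π)..π, g (y + t) := by
      rw [← intervalIntegral.integral_const_mul, ← intervalIntegral.integral_sub]
      · congr 1; funext t; ring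
      all_goals (apply Continuous.intervalIntegrable; fun_prop)
    have e2 := intervalIntegral.integral_comp_add_left (fun w => w * g w) y (a := -π) (b := π)
    rw [mm, e1, h.shift_int, e2]
    have := pi_pos
    rw [← sub_eq_add_neg]
    field_simp
  rw [e]
  have h1 := ((int_window_deriv (fun w => w * g w) (by fun_prop) x).const_mul (2 * π)⁻¹).sub
    (hasDerivAt_id x)
  refine h1.congr_deriv ?_
  have hp : g (x - π) = g (x + π) := by
    rw [← h.per (x - π)]; congr 1; ring
  rw [hp]
  have := pi_pos
  field_simp
  ring

lemma GD.uu_deriv {g κ} (h : GD g κ) (x : ℝ) : HasDerivAt (uu g) (-2 * mm g x) x := by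
  have hc := h.cont
  have e : uu g = fun x => (2 * π)⁻¹ * (∫ w in (x - π)..(x + π), w ^ 2 * g w)
      - 2 * x * mm g x - x ^ 2 := by
    funext y
    have e1 : ∫ t in (-π)..π, t ^ 2 * g (y + t)
        = (∫ t in (-π)..π, (y + t) ^ 2 * g (y + t)) - 2 * y * (∫ t in (-π)..π, t * g (y + t))
          - y ^ 2 * ∫ t in (-π)..π, g (y + t) := by
      rw [← intervalIntegral.integral_const_mul, ← intervalIntegral.integral_const_mul,
        ← intervalIntegral.integral_sub, ← intervalIntegral.integral_sub]
      · congr 1; funext t; ring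
      all_goals (apply Continuous.intervalIntegrable; fun_prop)
    have e2 := intervalIntegral.integral_comp_add_left (fun w => w ^ 2 * g w) y (a := -π) (b := π)
    rw [uu, e1, h.shift_int, e2, mm]
    have := pi_pos
    rw [← sub_eq_add_neg]
    field_simp
  rw [e]
  have h1 := (((int_window_deriv (fun w => w ^ 2 * g w) (by fun_prop) x).const_mul (2 * π)⁻¹).sub
    (((hasDerivAt_id x).const_mul 2).mul (h.mm_deriv x))).sub ((hasDerivAt_id x).pow 2)
  refine h1.congr_deriv ?_
  have hp : g (x - π) = g (x + π) := by
    rw [← h.per (x - π)]; congr 1; ring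
  rw [hp]
  have := pi_pos
  simp
  field_simp
  ring

lemma GD.mm_abs {g κ} (h : GD g κ) (x : ℝ) : |mm g x| ≤ π := by
  have hc := h.cont
  have hpi := pi_pos
  have h1 : |∫ t in (-π)..π, t * g (x + t)| ≤ ∫ t in (-π)..π, π * g (x + t) := by
    apply intervalIntegral.abs_integral_le_integral_abs (by linarith) |>.trans
    apply intervalIntegral.integral_mono_on (by linarith)
    · apply Continuous.intervalIntegrable; fun_prop
    · apply Continuous.intervalIntegrable; fun_prop
    · intro t ht
      rw [abs_mul, abs_of_nonneg (h.nonneg _)]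
      exact mul_le_mul_of_nonneg_right (abs_le.2 ⟨ht.1, ht.2⟩) (h.nonneg _)
  rw [intervalIntegral.integral_const_mul, h.shift_int] at h1
  rw [mm, abs_mul, abs_of_pos (by positivity)]
  rw [inv_mul_le_iff₀ (by positivity)]
  linarith

lemma GD.q_abs {g κ} (h : GD g κ) (x : ℝ) : |g x - 1| ≤ 2 * π * κ := by
  have := h.nonneg x
  have := h.le x
  have := h.one
  have := pi_gt_three
  rw [abs_le]; constructor <;> nlinarith

lemma GD.mm_cont {g κ} (h : GD g κ) : Continuous (mm g) :=
  continuous_iff_continuousAt.2 fun x => (h.mm_deriv x).continuousAt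
lemma GD.uu_cont {g κ} (h : GD g κ) : Continuous (uu g) :=
  continuous_iff_continuousAt.2 fun x => (h.uu_deriv x).continuousAt
lemma GD.mm_per {g κ} (h : GD g κ) : Periodic (mm g) (2 * π) := by
  intro x
  simp only [mm]
  congr 2; funext t
  rw [show x + 2 * π + t = x + t + 2 * π by ring, h.per]
lemma GD.uu_per {g κ} (h : GD g κ) : Periodic (uu g) (2 * π) := by
  intro x
  simp only [uu]
  congr 2; funext t
  rw [show x + 2 * π + t = x + t + 2 * π by ring, h.per]

/-- Lipschitz-type estimate -/
lemma GD.mm_lip {g κ} (h : GD g κ) (x y : ℝ) : |mm g y - mm g x| ≤ 2 * π * κ * |y - x| :=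
  convex_univ.norm_image_sub_le_of_norm_hasDerivWithin_le
    (fun z _ => (h.mm_deriv z).hasDerivWithinAt) (fun _ _ => h.q_abs _) (mem_univ x) (mem_univ y)

lemma GD.uu_taylor {g κ} (h : GD g κ) (x s : ℝ) :
    |uu g (x + s) - uu g x + 2 * s * mm g x| ≤ 4 * π * κ * s ^ 2 := by
  have hk : 0 ≤ κ := by linarith [h.one]
  have hpi := pi_pos
  have key := (convex_uIcc (0:ℝ) s).norm_image_sub_le_of_norm_hasDerivWithin_le
    (f := fun s => uu g (x + s) + 2 * s * mm g x)
    (f' := fun s => -2 * mm g (x + s) + 2 * mm g x) (C := 4 * π * κ * |s|) (x := 0) (y := s)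
    ?_ ?_ (by simp) (by simp)
  · simp at key
    rw [← sq_abs s]
    calc _ = |uu g (x + s) + 2 * s * mm g x - uu g x| := by congr 1; ring
      _ ≤ _ := key
      _ = _ := by ring
  · intro z _
    have := ((h.uu_deriv (x + z)).comp_const_add x z).add
      (((hasDerivAt_id z).const_mul 2).mul_const (mm g x))
    exact (this.congr_deriv (by simp)).hasDerivWithinAt
  · intro z hz
    have hz' : |z| ≤ |s| := by
      have := Set.abs_sub_left_of_mem_uIcc hz
      simpa using this
    have := h.mm_lip x (x + z)
    rw [Real.norm_eq_abs, show -2 * mm g (x + z) + 2 * mm g x = (-2) * (mm g (x + z) - mm g x) by ring,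
      abs_mul]
    simp at this ⊢
    have : 2 * π * κ * |z| ≤ 2 * π * κ * |s| := by gcongr
    linarith

def HH (g : ℝ → ℝ) (α β : ℝ) (x : ℝ) : ℝ :=
  2 * β ^ 2 * mm g x ^ 2 + β * (g (x + π) - 1)
    + α⁻¹ * ((2 * π)⁻¹ * (∫ t in (-π)..π, g (x + (1 - α * β) * t)
      * Real.exp (-β * (uu g (x - α * β * t) - uu g x))) - 1)

lemma GD.HH_cont {g κ} (h : GD g κ) (α β : ℝ) : Continuous (HH g α β) := by
  have h1 := h.mm_cont
  have h2 := h.uu_cont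
  have h3 := h.cont
  have : Continuous fun x => ∫ t in (-π)..π, g (x + (1 - α * β) * t)
      * Real.exp (-β * (uu g (x - α * β * t) - uu g x)) := by
    apply intervalIntegral.continuous_parametric_intervalIntegral_of_continuous'
    fun_prop
  unfold HH
  fun_prop

lemma per_int_zero_shift (f : ℝ → ℝ) (hf : Periodic f (2 * π)) (c : ℝ) :
    ∫ x in (-π)..π, f (x + c) = ∫ x in (-π)..π, f x := by
  rw [intervalIntegral.integral_comp_add_right]
  have := hf.intervalIntegral_add_eq (-π + c) (-π)
  convert this using 2 <;> ring

lemma per_deriv {f : ℝ → ℝ} (hf : Periodic f (2 * π)) : Periodic (deriv f) (2 * π) := by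
  intro x
  rw [← deriv_comp_add_const]
  congr 1
  funext y; exact hf y

lemma per_ends {f : ℝ → ℝ} (hf : Periodic f (2 * π)) : f π = f (-π) := by
  rw [← hf (-π)]; congr 1; ring

lemma GD.diffusion {g κ} (h : GD g κ) (β : ℝ) (φ : ℝ → ℝ) (hφ : Periodic φ (2 * π))
    (h2 : ContDiff ℝ 2 φ) :
    ∫ x in (-π)..π, Real.exp (-β * uu g x) * deriv (deriv φ) x
     = ∫ x in (-π)..π, φ x * ((4 * β ^ 2 * mm g x ^ 2 + 2 * β * (g (x + π) - 1))
        * Real.exp (-β * uu g x)) := by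
  have hm := h.mm_cont
  have hu := h.uu_cont
  have hg := h.cont
  have d1 : ContDiff ℝ 1 (deriv φ) := ((contDiff_succ_iff_deriv (n := 1)).1 h2).2.2
  have c0 : Continuous φ := h2.continuous
  have c1 : Continuous (deriv φ) := d1.continuous
  have c2 : Continuous (deriv (deriv φ)) := d1.continuous_deriv le_rfl
  have e0 : ∀ x, HasDerivAt φ (deriv φ x) x := fun x =>
    ((h2.differentiable (by norm_num)) x).hasDerivAt
  have e1 : ∀ x, HasDerivAt (deriv φ) (deriv (deriv φ) x) x := fun x =>
    ((d1.differentiable (by norm_num)) x).hasDerivAt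
  have r1 : ∀ x, HasDerivAt (fun x => Real.exp (-β * uu g x))
      (2 * β * mm g x * Real.exp (-β * uu g x)) x := fun x =>
    (((h.uu_deriv x).const_mul (-β)).exp).congr_deriv (by ring)
  have r2 : ∀ x, HasDerivAt (fun x => 2 * β * mm g x * Real.exp (-β * uu g x))
      ((4 * β ^ 2 * mm g x ^ 2 + 2 * β * (g (x + π) - 1)) * Real.exp (-β * uu g x)) x := fun x =>
    (((h.mm_deriv x).const_mul (2 * β)).mul (r1 x)).congr_deriv (by ring)
  rw [intervalIntegral.integral_mul_deriv_eq_deriv_mul (fun x _ => r1 x) (fun x _ => e1 x)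
    (by apply Continuous.intervalIntegrable; fun_prop) (by apply Continuous.intervalIntegrable; fun_prop)]
  rw [intervalIntegral.integral_mul_deriv_eq_deriv_mul (fun x _ => r2 x) (fun x _ => e0 x)
    (by apply Continuous.intervalIntegrable; fun_prop) (by apply Continuous.intervalIntegrable; fun_prop)]
  rw [per_ends h.uu_per, per_ends h.mm_per, per_ends hφ, per_ends (per_deriv hφ)]
  simp only [sub_self, zero_sub, neg_neg]
  congr 1; funext x; ring

lemma GD.jump {g κ} (h : GD g κ) (a : ℝ) (ρ φ : ℝ → ℝ) (hρ : Periodic ρ (2 * π))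
    (hρc : Continuous ρ) (hφ : Periodic φ (2 * π)) (hφc : Continuous φ) :
    ∫ x in (-π)..π, ρ x * ∫ t in (-π)..π, (φ (x + a * t) - φ x) * g (x + t)
     = ∫ x in (-π)..π, φ x * ((∫ t in (-π)..π, g (x + (1 - a) * t) * ρ (x - a * t))
        - 2 * π * ρ x) := by
  have hg := h.cont
  have hpi := pi_pos
  have e1 : ∀ x, ρ x * ∫ t in (-π)..π, (φ (x + a * t) - φ x) * g (x + t)
      = (∫ t in (-π)..π, ρ x * φ (x + a * t) * g (x + t)) - 2 * π * (ρ x * φ x) := by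
    intro x
    have : ∫ t in (-π)..π, (φ (x + a * t) - φ x) * g (x + t)
      = (∫ t in (-π)..π, φ (x + a * t) * g (x + t)) - φ x * ∫ t in (-π)..π, g (x + t) := by
      rw [← intervalIntegral.integral_const_mul, ← intervalIntegral.integral_sub]
      · congr 1; funext t; ring
      all_goals (apply Continuous.intervalIntegrable; fun_prop)
    rw [this, h.shift_int, mul_sub, ← intervalIntegral.integral_const_mul]
    simp only [mul_assoc]
    ring
  have e2 : ∀ x, φ x * ((∫ t in (-π)..π, g (x + (1 - a) * t) * ρ (x - a * t))
        - 2 * π * ρ x) = (∫ t in (-π)..π, φ x * (g (x + (1 - a) * t) * ρ (x - a * t)))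
          - 2 * π * (ρ x * φ x) := by
    intro x
    rw [intervalIntegral.integral_const_mul]; ring
  have c1 : Continuous fun x => ∫ t in (-π)..π, ρ x * φ (x + a * t) * g (x + t) := by
    apply intervalIntegral.continuous_parametric_intervalIntegral_of_continuous'
    fun_prop
  have c2 : Continuous fun x => ∫ t in (-π)..π, φ x * (g (x + (1 - a) * t) * ρ (x - a * t)) := by
    apply intervalIntegral.continuous_parametric_intervalIntegral_of_continuous'
    fun_prop
  simp only [e1, e2]
  rw [intervalIntegral.integral_sub (c1.intervalIntegrable _ _)
      (by apply Continuous.intervalIntegrable; fun_prop),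
    intervalIntegral.integral_sub (c2.intervalIntegrable _ _)
      (by apply Continuous.intervalIntegrable; fun_prop)]
  congr 1
  rw [swapII (fun x t => ρ x * φ (x + a * t) * g (x + t)) (by fun_prop) _ _ _ _
      (by linarith) (by linarith),
    swapII (fun x t => φ x * (g (x + (1 - a) * t) * ρ (x - a * t))) (by fun_prop) _ _ _ _
      (by linarith) (by linarith)]
  congr 1; funext t
  rw [← per_int_zero_shift (fun x => φ x * (g (x + (1 - a) * t) * ρ (x - a * t))) _ (a * t)]
  · congr 1; funext x
    rw [show x + a * t + (1 - a) * t = x + t by ring, show x + a * t - a * t = x by ring]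
    ring
  · intro x
    simp only
    rw [show x + 2 * π + (1 - a) * t = x + (1 - a) * t + 2 * π by ring,
      show x + 2 * π - a * t = x - a * t + 2 * π by ring, hφ, h.per, hρ]

lemma GD.identity {g κ} (h : GD g κ) (α β : ℝ) (φ : ℝ → ℝ) (hφ : Periodic φ (2 * π))
    (h2 : ContDiff ℝ 2 φ) :
    ∫ x in (-π)..π, Real.exp (-β * uu g x) * ((1 / 2) * deriv (deriv φ) x + α⁻¹ * ((2 * π)⁻¹ *
        ∫ t in (-π)..π, (φ (x + α * β * t) - φ x) * g (x + t)))
     = ∫ x in (-π)..π, Real.exp (-β * uu g x) * (φ x * HH g α β x) := by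
  have hm := h.mm_cont
  have hu := h.uu_cont
  have hg := h.cont
  have hpi := pi_pos
  have d1 : ContDiff ℝ 1 (deriv φ) := ((contDiff_succ_iff_deriv (n := 1)).1 h2).2.2
  have c0 : Continuous φ := h2.continuous
  have c2 : Continuous (deriv (deriv φ)) := d1.continuous_deriv le_rfl
  have k1 : Continuous fun x => ∫ t in (-π)..π, (φ (x + α * β * t) - φ x) * g (x + t) := by
    apply intervalIntegral.continuous_parametric_intervalIntegral_of_continuous'
    fun_prop
  have k2 : Continuous fun x => ∫ t in (-π)..π,
      g (x + (1 - α * β) * t) * Real.exp (-β * uu g (x - α * β * t)) := by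
    apply intervalIntegral.continuous_parametric_intervalIntegral_of_continuous'
    fun_prop
  have J := h.jump (α * β) (fun x => Real.exp (-β * uu g x)) φ
    (fun x => by simp only [h.uu_per x]) (by fun_prop) hφ c0
  have D := h.diffusion β φ hφ h2
  have l : ∀ x, Real.exp (-β * uu g x) * ((1 / 2) * deriv (deriv φ) x + α⁻¹ * ((2 * π)⁻¹ *
        ∫ t in (-π)..π, (φ (x + α * β * t) - φ x) * g (x + t)))
      = (1 / 2) * (Real.exp (-β * uu g x) * deriv (deriv φ) x)
        + α⁻¹ * (2 * π)⁻¹ * (Real.exp (-β * uu g x) *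
          ∫ t in (-π)..π, (φ (x + α * β * t) - φ x) * g (x + t)) := fun x => by ring
  have r : ∀ x, Real.exp (-β * uu g x) * (φ x * HH g α β x)
      = (1 / 2) * (φ x * ((4 * β ^ 2 * mm g x ^ 2 + 2 * β * (g (x + π) - 1))
        * Real.exp (-β * uu g x))) + α⁻¹ * (2 * π)⁻¹ * (φ x * ((∫ t in (-π)..π,
          g (x + (1 - α * β) * t) * Real.exp (-β * uu g (x - α * β * t)))
        - 2 * π * Real.exp (-β * uu g x))) := by
    intro x
    have : ∫ t in (-π)..π, g (x + (1 - α * β) * t) * Real.exp (-β * uu g (x - α * β * t))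
      = Real.exp (-β * uu g x) * ∫ t in (-π)..π, g (x + (1 - α * β) * t)
      * Real.exp (-β * (uu g (x - α * β * t) - uu g x)) := by
      rw [← intervalIntegral.integral_const_mul]
      congr 1; funext t
      rw [mul_left_comm, ← Real.exp_add]; congr 2; ring
    rw [this, HH]
    generalize (∫ t in (-π)..π, g (x + (1 - α * β) * t)
      * Real.exp (-β * (uu g (x - α * β * t) - uu g x))) = I
    have hpp : (2 * π)⁻¹ * (2 * π) = 1 := by field_simp
    linear_combination (-α⁻¹ * φ x * Real.exp (-β * uu g x)) * (-hpp)
  simp only [l, r]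
  rw [intervalIntegral.integral_add, intervalIntegral.integral_add,
    intervalIntegral.integral_const_mul, intervalIntegral.integral_const_mul,
    intervalIntegral.integral_const_mul, intervalIntegral.integral_const_mul, J, D]
  all_goals (apply Continuous.intervalIntegrable; fun_prop)

lemma GD.split {g κ} (h : GD g κ) (k : ℝ → ℝ) (hk : Continuous k) (x a : ℝ) :
    (1 - a) * ∫ t in (-π)..π, k ((1 - a) * t) * g (x + (1 - a) * t)
      = (∫ t in (-π)..π, k t * g (x + t)) - (∫ t in (π - π * a)..π, k t * g (x + t))
        - ∫ t in (-π)..(-π + π * a), k t * g (x + t) := by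
  have hg := h.cont
  have hc : Continuous fun t => k t * g (x + t) := by fun_prop
  rw [intervalIntegral.mul_integral_comp_mul_left (f := fun t => k t * g (x + t)),
    show (1 - a) * π = π - π * a by ring, show (1 - a) * (-π) = -π + π * a by ring,
    ← intervalIntegral.integral_add_adjacent_intervals (hc.intervalIntegrable (-π) (-π + π * a))
      (hc.intervalIntegrable (-π + π * a) π),
    ← intervalIntegral.integral_add_adjacent_intervals
      (hc.intervalIntegrable (-π + π * a) (π - π * a)) (hc.intervalIntegrable (π - π * a) π)]
  ring

lemma GD.Abound {g κ} (h : GD g κ) (x a : ℝ) (ha : 0 < a) (ha2 : a < 1 / 2) :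
    |(2 * π)⁻¹ * (∫ t in (-π)..π, g (x + (1 - a) * t)) - 1 + a * (g (x + π) - 1)|
      ≤ 100 * κ ^ 2 * a ^ 2 := by
  have hg := h.cont
  have hpi := pi_pos
  have hpi4 := pi_lt_d2
  have hκ := h.one
  have S := h.split (fun _ => 1) continuous_const x a
  simp only [one_mul] at S
  rw [h.shift_int] at S
  set T1 := ∫ t in (π - π * a)..π, g (x + t) with hT1
  set T2 := ∫ t in (-π)..(-π + π * a), g (x + t) with hT2
  have b1 : |T1 - π * a * g (x + π)| ≤ 2 * π * κ ^ 2 * (π * a) * (π * a) := by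
    have : T1 - π * a * g (x + π) = ∫ t in (π - π * a)..π, (g (x + t) - g (x + π)) := by
      rw [intervalIntegral.integral_sub (by apply Continuous.intervalIntegrable; fun_prop)
        (by apply Continuous.intervalIntegrable; fun_prop), intervalIntegral.integral_const]
      simp [hT1]
    rw [this]
    have := intervalIntegral.norm_integral_le_of_norm_le_const (a := π - π * a) (b := π)
      (f := fun t => g (x + t) - g (x + π)) (C := 2 * π * κ ^ 2 * (π * a)) (by
        intro t ht
        rw [uIoc_of_le (by nlinarith)] at ht
        refine (h.lip _ _).trans ?_
        gcongr
        rw [abs_le]; constructor <;> nlinarith [ht.1, ht.2])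
    rw [Real.norm_eq_abs] at this
    refine this.trans_eq ?_
    rw [abs_of_nonneg (by nlinarith)]; ring
  have b2 : |T2 - π * a * g (x + π)| ≤ 2 * π * κ ^ 2 * (π * a) * (π * a) := by
    have hp : g (x - π) = g (x + π) := by
      rw [← h.per (x - π)]; congr 1; ring
    have : T2 - π * a * g (x + π) = ∫ t in (-π)..(-π + π * a), (g (x + t) - g (x + π)) := by
      rw [intervalIntegral.integral_sub (by apply Continuous.intervalIntegrable; fun_prop)
        (by apply Continuous.intervalIntegrable; fun_prop), intervalIntegral.integral_const]
      simp [hT2]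
    rw [this]
    have := intervalIntegral.norm_integral_le_of_norm_le_const (a := -π) (b := -π + π * a)
      (f := fun t => g (x + t) - g (x + π)) (C := 2 * π * κ ^ 2 * (π * a)) (by
        intro t ht
        rw [uIoc_of_le (by nlinarith)] at ht
        rw [← hp]
        refine (h.lip _ _).trans ?_
        gcongr
        rw [abs_le]; constructor <;> nlinarith [ht.1, ht.2])
    rw [Real.norm_eq_abs] at this
    refine this.trans_eq ?_
    rw [abs_of_nonneg (by nlinarith)]; ring
  set I := ∫ t in (-π)..π, g (x + (1 - a) * t)
  set G := g (x + π) with hG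
  have hq : |G - 1| ≤ 2 * π * κ := h.q_abs _
  have key : (2 * π * (1 - a)) * ((2 * π)⁻¹ * I - 1 + a * (G - 1))
      = - (T1 - π * a * G) - (T2 - π * a * G) - 2 * π * a ^ 2 * (G - 1) := by
    have : (2 * π * (1 - a)) * ((2 * π)⁻¹ * I - 1 + a * (G - 1))
      = (1 - a) * I + (2 * π * (1 - a)) * (- 1 + a * (G - 1)) := by field_simp; ring
    rw [this, S]; ring
  have k2 : |(2 * π * (1 - a)) * ((2 * π)⁻¹ * I - 1 + a * (G - 1))|
      ≤ 4 * π * κ ^ 2 * (π * a) ^ 2 + 2 * π * a ^ 2 * (2 * π * κ) := by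
    rw [key]
    have k3 : |2 * π * a ^ 2 * (G - 1)| ≤ 2 * π * a ^ 2 * (2 * π * κ) := by
      rw [abs_mul, abs_of_pos (by positivity : 0 < 2 * π * a ^ 2)]
      gcongr
    rw [abs_le] at *
    constructor <;> nlinarith [b1.1, b1.2, b2.1, b2.2, k3.1, k3.2]
  rw [abs_mul, abs_of_pos (by have : 0 < 1 - a := by linarith
                              positivity)] at k2
  set Q := |(2 * π)⁻¹ * I - 1 + a * (G - 1)| with hQ
  have hQ0 : 0 ≤ Q := abs_nonneg _
  have k4 : π * Q ≤ 4 * π * κ ^ 2 * (π * a) ^ 2 + 2 * π * a ^ 2 * (2 * π * κ) := by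
    refine le_trans ?_ k2
    gcongr
    nlinarith
  have k5 : Q ≤ (4 * π ^ 2) * (κ ^ 2 * a ^ 2) + (4 * π) * (κ * a ^ 2) := by
    have : π * Q ≤ π * ((4 * π ^ 2) * (κ ^ 2 * a ^ 2) + (4 * π) * (κ * a ^ 2)) := by
      refine k4.trans_eq ?_; ring
    exact le_of_mul_le_mul_left this hpi
  have k6 : κ * a ^ 2 ≤ κ ^ 2 * a ^ 2 := by gcongr; nlinarith
  have k7 : π ^ 2 ≤ 10 := by nlinarith
  nlinarith [mul_le_mul_of_nonneg_right k7 (by positivity : 0 ≤ κ ^ 2 * a ^ 2),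
    mul_le_mul_of_nonneg_right hpi4.le (by positivity : 0 ≤ κ ^ 2 * a ^ 2),
    mul_le_mul_of_nonneg_left k6 hpi.le, (by positivity : 0 ≤ κ ^ 2 * a ^ 2)]

lemma GD.Bbound {g κ} (h : GD g κ) (x a : ℝ) (ha : 0 < a) (ha2 : a < 1 / 2) :
    |(2 * π)⁻¹ * (∫ t in (-π)..π, t * g (x + (1 - a) * t)) - mm g x|
      ≤ 200 * κ * a := by
  have hg := h.cont
  have hpi := pi_pos
  have hpi4 := pi_lt_d2
  have hκ := h.one
  have S := h.split (fun t => t) continuous_id x a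
  set T1 := ∫ t in (π - π * a)..π, t * g (x + t) with hT1
  set T2 := ∫ t in (-π)..(-π + π * a), t * g (x + t) with hT2
  have gb : ∀ t, |g t| ≤ 2 * π * κ := fun t => by
    rw [abs_of_nonneg (h.nonneg _)]; exact h.le _
  have b1 : |T1| ≤ π * (2 * π * κ) * (π * a) := by
    have := intervalIntegral.norm_integral_le_of_norm_le_const (a := π - π * a) (b := π)
      (f := fun t => t * g (x + t)) (C := π * (2 * π * κ)) (by
        intro t ht
        rw [uIoc_of_le (by nlinarith)] at ht
        rw [norm_mul]
        refine mul_le_mul ?_ (gb _) (norm_nonneg _) hpi.le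
        rw [Real.norm_eq_abs, abs_le]; constructor <;> nlinarith [ht.1, ht.2])
    rw [Real.norm_eq_abs] at this
    refine this.trans_eq ?_
    rw [abs_of_nonneg (by nlinarith)]; ring
  have b2 : |T2| ≤ π * (2 * π * κ) * (π * a) := by
    have := intervalIntegral.norm_integral_le_of_norm_le_const (a := -π) (b := -π + π * a)
      (f := fun t => t * g (x + t)) (C := π * (2 * π * κ)) (by
        intro t ht
        rw [uIoc_of_le (by nlinarith)] at ht
        rw [norm_mul]
        refine mul_le_mul ?_ (gb _) (norm_nonneg _) hpi.le
        rw [Real.norm_eq_abs, abs_le]; constructor <;> nlinarith [ht.1, ht.2])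
    rw [Real.norm_eq_abs] at this
    refine this.trans_eq ?_
    rw [abs_of_nonneg (by nlinarith)]; ring
  have hm := h.mm_abs x
  have hm1 : ∫ t in (-π)..π, t * g (x + t) = 2 * π * mm g x := by
    rw [mm]; field_simp
  have hI : ∫ t in (-π)..π, (1 - a) * t * g (x + (1 - a) * t)
      = (1 - a) * ∫ t in (-π)..π, t * g (x + (1 - a) * t) := by
    rw [← intervalIntegral.integral_const_mul]; simp only [mul_assoc]
  rw [hm1, hI] at S
  set I := ∫ t in (-π)..π, t * g (x + (1 - a) * t)
  set m := mm g x
  have key : (2 * π * (1 - a) ^ 2) * ((2 * π)⁻¹ * I - m)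
      = - T1 - T2 + 2 * π * (2 * a - a ^ 2) * m := by
    have : (2 * π * (1 - a) ^ 2) * ((2 * π)⁻¹ * I - m)
      = (1 - a) * ((1 - a) * I) - 2 * π * (1 - a) ^ 2 * m := by field_simp
    rw [this, S]; ring
  have k2 : |(2 * π * (1 - a) ^ 2) * ((2 * π)⁻¹ * I - m)|
      ≤ 4 * π ^ 3 * κ * a + 4 * π ^ 2 * a := by
    rw [key]
    have k3 : |2 * π * (2 * a - a ^ 2) * m| ≤ 4 * π ^ 2 * a := by
      rw [abs_mul, abs_of_pos (by have : 0 < 2 * a - a ^ 2 := by nlinarith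
                                  positivity)]
      calc 2 * π * (2 * a - a ^ 2) * |m| ≤ 2 * π * (2 * a) * π := by
            gcongr; nlinarith
        _ = _ := by ring
    rw [abs_le] at *
    constructor <;> nlinarith [b1.1, b1.2, b2.1, b2.2, k3.1, k3.2]
  have hr : (1:ℝ) / 4 ≤ (1 - a) ^ 2 := by nlinarith
  rw [abs_mul, abs_of_pos (by have : 0 < 1 - a := by linarith
                              positivity)] at k2
  set Q := |(2 * π)⁻¹ * I - m| with hQ
  have hQ0 : 0 ≤ Q := abs_nonneg _
  have k4 : π * (Q / 2) ≤ π * (4 * π ^ 2 * κ * a + 4 * π * a) := by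
    calc π * (Q / 2) = (2 * π * (1 / 4)) * Q := by ring
      _ ≤ (2 * π * (1 - a) ^ 2) * Q := by gcongr
      _ ≤ _ := k2
      _ = _ := by ring
  have k5 := le_of_mul_le_mul_left k4 hpi
  have k6 : a ≤ κ * a := by nlinarith
  have k7 : π ^ 2 ≤ 10 := by nlinarith
  nlinarith [mul_le_mul_of_nonneg_right k7 (by positivity : 0 ≤ κ * a),
    mul_le_mul_of_nonneg_right hpi4.le (by positivity : 0 ≤ κ * a),
    mul_le_mul_of_nonneg_left k6 hpi.le, (by positivity : 0 ≤ κ * a)]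

lemma exp_taylor (τ : ℝ) : |Real.exp τ - 1 - τ| ≤ τ ^ 2 * Real.exp |τ| := by
  have := Complex.norm_exp_sub_sum_le_norm_mul_exp (τ : ℂ) 2
  simp only [Finset.sum_range_succ, Finset.sum_range_zero, Nat.factorial, pow_zero, pow_one] at this
  rw [Complex.norm_real, Real.norm_eq_abs, sq_abs] at this
  rw [← Real.norm_eq_abs, ← Complex.norm_real]
  convert this using 2
  push_cast; ring

/-- Pointwise error in the expansion of the exponential. -/
lemma GD.Ebound {g κ} (h : GD g κ) (x a β t : ℝ) (ha : 0 < a) (hβ : 1 ≤ β)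
    (c1 : a ^ 2 * β ^ 2 ≤ 1) (c2 : a ^ 2 * (β * κ) ≤ 1) (ht : |t| ≤ π) :
    |Real.exp (-β * (uu g (x - a * t) - uu g x)) - (1 - 2 * β * a * t * mm g x)|
      ≤ (35000 * Real.exp 150) * (a ^ 2 * (β ^ 2 + β * κ)) := by
  have hpi := pi_pos
  have hpi4 := pi_lt_d2
  have hκ := h.one
  have k7 : π ^ 2 ≤ 10 := by nlinarith
  set s := a ^ 2 * (β * κ) with hs
  have hs0 : 0 ≤ s := by positivity
  set R := uu g (x - a * t) - uu g x - 2 * a * t * mm g x with hR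
  have hRb : |β * R| ≤ 128 * s := by
    have := h.uu_taylor x (-(a * t))
    have e : uu g (x + -(a * t)) - uu g x + 2 * -(a * t) * mm g x = R := by
      rw [hR, ← sub_eq_add_neg]; ring
    rw [e] at this
    rw [abs_mul, abs_of_pos (by linarith : 0 < β)]
    have t2 : t ^ 2 ≤ 10 := by rw [← sq_abs]; nlinarith [abs_nonneg t]
    calc β * |R| ≤ β * (4 * π * κ * (-(a * t)) ^ 2) := by gcongr
      _ = 4 * π * t ^ 2 * s := by rw [hs]; ring
      _ ≤ 4 * 3.15 * 10 * s := by gcongr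
      _ ≤ 128 * s := by nlinarith
  have hmt : |2 * β * a * t * mm g x| ≤ 20 * (a * β) := by
    rw [show 2 * β * a * t * mm g x = 2 * (a * β) * (t * mm g x) by ring, abs_mul, abs_mul t,
      abs_of_pos (by positivity : 0 < 2 * (a * β))]
    calc 2 * (a * β) * (|t| * |mm g x|) ≤ 2 * (a * β) * (π * π) := by
          gcongr; exact h.mm_abs x
      _ ≤ _ := by nlinarith [(by positivity : 0 < a * β)]
  have hab : a * β ≤ 1 := by
    have : (a * β) ^ 2 ≤ 1 := by nlinarith
    nlinarith [(by positivity : 0 < a * β)]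
  set τ := -β * (uu g (x - a * t) - uu g x) with hτ
  have eτ : τ = -(2 * β * a * t * mm g x) - β * R := by rw [hτ, hR]; ring
  have hτb : |τ| ≤ 20 * (a * β) + 128 * s := by
    rw [eτ]
    refine (abs_sub _ _).trans ?_
    rw [abs_neg]; linarith
  have hτ150 : |τ| ≤ 150 := by linarith
  have hτ2 : τ ^ 2 ≤ 800 * (a ^ 2 * β ^ 2) + 32768 * s := by
    rw [← sq_abs]
    have : |τ| ^ 2 ≤ (20 * (a * β) + 128 * s) ^ 2 := by gcongr
    have s2 : s ^ 2 ≤ s := by nlinarith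
    nlinarith [sq_nonneg (20 * (a * β) - 128 * s)]
  have hE := exp_taylor τ
  have e1 : Real.exp |τ| ≤ Real.exp 150 := Real.exp_le_exp.2 hτ150
  have e2 : 1 ≤ Real.exp 150 := Real.one_le_exp (by norm_num)
  have : Real.exp τ - (1 - 2 * β * a * t * mm g x) = (Real.exp τ - 1 - τ) - β * R := by
    rw [eτ]; ring
  rw [this]
  refine (abs_sub _ _).trans ?_
  have f1 : τ ^ 2 * Real.exp |τ| ≤ (800 * (a ^ 2 * β ^ 2) + 32768 * s) * Real.exp 150 := by
    gcongr
  have f2 : 128 * s ≤ 128 * s * Real.exp 150 := by nlinarith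
  have f3 : 0 ≤ a ^ 2 * β ^ 2 * Real.exp 150 := by positivity
  have f4 : 0 ≤ s * Real.exp 150 := by positivity
  have : (35000 * Real.exp 150) * (a ^ 2 * (β ^ 2 + β * κ))
    = 35000 * (a ^ 2 * β ^ 2 * Real.exp 150) + 35000 * (s * Real.exp 150) := by rw [hs]; ring
  rw [this]
  nlinarith

lemma final_num (β κ e : ℝ) (he : 1 ≤ e) (hβ : 0 ≤ β) (hκ : 0 ≤ κ) :
    100 * κ ^ 2 + 1260 * (β * κ) + 70000 * e * (β ^ 2 + β * κ)
      ≤ 200000 * e * (β ^ 2 + κ ^ 2) := by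
  have am : 2 * (β * κ) ≤ β ^ 2 + κ ^ 2 := by linarith [two_mul_le_add_sq β κ]
  have k0 := sq_nonneg κ
  have b0 := sq_nonneg β
  have q2 : 730 * (β ^ 2 + κ ^ 2) ≤ e * (730 * (β ^ 2 + κ ^ 2)) :=
    le_mul_of_one_le_left (by positivity) he
  have q3 : e * (β ^ 2 + β * κ) ≤ e * (2 * (β ^ 2 + κ ^ 2)) := by
    gcongr
    linarith
  have q4 : 0 ≤ e * (β ^ 2 + κ ^ 2) := by positivity
  linarith

lemma GD.Hbound {g κ} (h : GD g κ) (x α β : ℝ) (hα : 0 < α) (hβ : 1 ≤ β) (ha2 : α * β < 1 / 2)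
    (c : α ^ 2 * (β ^ 3 * (β + κ)) ≤ 1) :
    |HH g α β x| ≤ (200000 * Real.exp 150) * (α * β ^ 2 * (β ^ 2 + κ ^ 2)) := by
  have hg := h.cont
  have hu := h.uu_cont
  have hpi := pi_pos
  have hpi4 := pi_lt_d2
  have hκ := h.one
  set a := α * β with ha
  have ha0 : 0 < a := by positivity
  have c1 : a ^ 2 * β ^ 2 ≤ 1 := by
    have : 0 ≤ α ^ 2 * β ^ 3 * κ := by positivity
    rw [ha]; nlinarith
  have c2 : a ^ 2 * (β * κ) ≤ 1 := by
    have : 0 ≤ α ^ 2 * β ^ 4 := by positivity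
    rw [ha]; nlinarith
  set K := 35000 * Real.exp 150 with hK
  have e2 : 1 ≤ Real.exp 150 := Real.one_le_exp (by norm_num)
  set m := mm g x with hm
  set M := K * (a ^ 2 * (β ^ 2 + β * κ)) with hM
  have hM0 : 0 ≤ M := by positivity
  set A := (2 * π)⁻¹ * ∫ t in (-π)..π, g (x + (1 - a) * t) with hA
  set B := (2 * π)⁻¹ * ∫ t in (-π)..π, t * g (x + (1 - a) * t) with hB
  set E : ℝ → ℝ := fun t => Real.exp (-β * (uu g (x - a * t) - uu g x)) - (1 - 2 * β * a * t * m)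
    with hE
  have hEc : Continuous E := by rw [hE]; fun_prop
  set D := (2 * π)⁻¹ * ∫ t in (-π)..π, g (x + (1 - a) * t) * E t with hD
  have hJ : (2 * π)⁻¹ * (∫ t in (-π)..π, g (x + (1 - a) * t)
      * Real.exp (-β * (uu g (x - a * t) - uu g x))) = A - 2 * β * a * m * B + D := by
    have : ∫ t in (-π)..π, g (x + (1 - a) * t) * Real.exp (-β * (uu g (x - a * t) - uu g x))
      = (∫ t in (-π)..π, g (x + (1 - a) * t)) - 2 * β * a * m *
        (∫ t in (-π)..π, t * g (x + (1 - a) * t)) + ∫ t in (-π)..π, g (x + (1 - a) * t) * E t := by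
      rw [← intervalIntegral.integral_const_mul, ← intervalIntegral.integral_sub,
        ← intervalIntegral.integral_add]
      · congr 1; funext t; rw [hE]; ring
      all_goals (apply Continuous.intervalIntegrable; fun_prop)
    rw [this, hA, hB, hD]; ring
  have bA := h.Abound x a ha0 ha2
  have bB := h.Bbound x a ha0 ha2
  rw [← hA] at bA
  rw [← hB, ← hm] at bB
  have hA2 : A ≤ 2 := by
    have S := h.split (fun _ => 1) continuous_const x a
    simp only [one_mul] at S
    rw [h.shift_int] at S
    have p1 : 0 ≤ ∫ t in (π - π * a)..π, g (x + t) :=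
      intervalIntegral.integral_nonneg (by nlinarith) fun t _ => h.nonneg _
    have p2 : 0 ≤ ∫ t in (-π)..(-π + π * a), g (x + t) :=
      intervalIntegral.integral_nonneg (by nlinarith) fun t _ => h.nonneg _
    have p3 : 0 ≤ ∫ t in (-π)..π, g (x + (1 - a) * t) :=
      intervalIntegral.integral_nonneg (by linarith) fun t _ => h.nonneg _
    rw [hA, inv_mul_le_iff₀ (by positivity)]
    nlinarith
  have bD : |D| ≤ 2 * M := by
    have : |∫ t in (-π)..π, g (x + (1 - a) * t) * E t| ≤ ∫ t in (-π)..π, M * g (x + (1 - a) * t) := by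
      apply intervalIntegral.abs_integral_le_integral_abs (by linarith) |>.trans
      apply intervalIntegral.integral_mono_on (by linarith)
      · apply Continuous.intervalIntegrable; fun_prop
      · apply Continuous.intervalIntegrable; fun_prop
      · intro t ht
        rw [abs_mul, abs_of_nonneg (h.nonneg _), mul_comm]
        exact mul_le_mul_of_nonneg_right
          (h.Ebound x a β t ha0 hβ c1 c2 (abs_le.2 ⟨ht.1, ht.2⟩)) (h.nonneg _)
    rw [intervalIntegral.integral_const_mul] at this
    rw [hD, abs_mul, abs_of_pos (by positivity)]
    calc _ ≤ (2 * π)⁻¹ * (M * ∫ t in (-π)..π, g (x + (1 - a) * t)) := by gcongr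
      _ = A * M := by rw [hA]; ring
      _ ≤ 2 * M := by gcongr
  have hH : HH g α β x = α⁻¹ * ((A - 1 + a * (g (x + π) - 1)) - 2 * (β * a) * m * (B - m) + D) := by
    rw [HH, ← ha, hJ, ← hm, ha]; field_simp; ring
  have bm : |2 * (β * a) * m * (B - m)| ≤ 2 * (β * a) * 3.15 * (200 * κ * a) := by
    rw [abs_mul, abs_mul, abs_of_pos (by positivity : 0 < 2 * (β * a))]
    gcongr
    exact (h.mm_abs x).trans hpi4.le
  have tot : |(A - 1 + a * (g (x + π) - 1)) - 2 * (β * a) * m * (B - m) + D|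
      ≤ 100 * κ ^ 2 * a ^ 2 + 2 * (β * a) * 3.15 * (200 * κ * a) + 2 * M := by
    refine (abs_add_le _ _).trans ?_
    refine add_le_add ((abs_sub _ _).trans ?_) bD
    exact add_le_add bA bm
  have fin : 100 * κ ^ 2 * a ^ 2 + 2 * (β * a) * 3.15 * (200 * κ * a) + 2 * M
      ≤ (200000 * Real.exp 150) * (a ^ 2 * (β ^ 2 + κ ^ 2)) := by
    have w := final_num β κ (Real.exp 150) e2 (by linarith) (by linarith)
    calc _ = a ^ 2 * (100 * κ ^ 2 + 1260 * (β * κ) + 70000 * Real.exp 150 * (β ^ 2 + β * κ)) := by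
          rw [hM, hK]; ring
      _ ≤ a ^ 2 * (200000 * Real.exp 150 * (β ^ 2 + κ ^ 2)) := by gcongr
      _ = _ := by ring
  rw [hH, abs_mul, abs_of_pos (by positivity), inv_mul_le_iff₀ hα]
  refine (tot.trans fin).trans_eq ?_
  rw [ha]; ring

lemma int_lam (f : 𝕋 → ℝ) : ∫ z, f z ∂lam = (2 * π)⁻¹ * ∫ x in (-π)..π, f (x : 𝕋) := by
  rw [lam, integral_smul_measure, ← AddCircle.intervalIntegral_preimage (2 * π) (-π) f,
    show -π + 2 * π = π by ring, ENNReal.toReal_inv, ENNReal.toReal_ofReal two_pi_pos.le, smul_eq_mul]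

lemma int_lam_shift (f : 𝕋 → ℝ) (z : 𝕋) : ∫ y, f (z + y) ∂lam = ∫ y, f y ∂lam := by
  rw [lam, integral_smul_measure, integral_smul_measure, integral_add_left_eq_self]

lemma rep_coe {x : ℝ} (hx : x ∈ Ioc (-π) π) : rep (x : 𝕋) = x := by
  rw [rep]
  exact AddCircle.equivIoc_coe_of_mem (p := 2 * π) (a := -π) ⟨hx.1, by linarith [hx.2]⟩

lemma coe_rep (z : 𝕋) : ((rep z : ℝ) : 𝕋) = z := AddCircle.coe_equivIoc (p := 2 * π) (a := -π)

lemma rep_meas : Measurable rep :=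
  measurable_subtype_coe.comp (AddCircle.measurableEquivIoc (2 * π) (-π)).measurable

lemma norm_coe_small {x : ℝ} (hx : |x| ≤ π) : ‖(x : 𝕋)‖ = |x| := by
  rw [AddCircle.norm_coe_eq_abs_iff (2 * π) (by positivity), abs_of_pos two_pi_pos]
  linarith

lemma circ_congr {f k : ℝ → ℝ} (h : ∀ x ∈ Ioc (-π) π, f x = k x) :
    ∫ x in (-π)..π, f x = ∫ x in (-π)..π, k x := by
  apply intervalIntegral.integral_congr_ae
  refine .of_forall fun x hx => h x ?_
  rwa [uIoc_of_le (by linarith [pi_pos])] at hx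

lemma tri_int (κ : ℝ) (hκ : 1 ≤ κ) : ∫ t in (-π)..π, max (1 - κ * |t|) 0 = κ⁻¹ := by
  have hpi := pi_gt_three
  have hk : 0 < κ := by linarith
  have hk1 : κ⁻¹ ≤ 1 := inv_le_one_of_one_le₀ hκ
  have hk0 : 0 < κ⁻¹ := by positivity
  have hkk : κ * κ⁻¹ = 1 := by field_simp
  have hc : Continuous fun t : ℝ => max (1 - κ * |t|) 0 := by fun_prop
  have I : ∀ a b, IntervalIntegrable (fun t : ℝ => max (1 - κ * |t|) 0) volume a b := fun a b =>
    hc.intervalIntegrable a b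
  have p : ∫ t in (0:ℝ)..π, max (1 - κ * |t|) 0 = κ⁻¹ / 2 := by
    rw [← intervalIntegral.integral_add_adjacent_intervals (I 0 κ⁻¹) (I κ⁻¹ π)]
    have h1 : ∫ t in (0:ℝ)..κ⁻¹, max (1 - κ * |t|) 0 = ∫ t in (0:ℝ)..κ⁻¹, (1 - κ * t) := by
      apply intervalIntegral.integral_congr
      intro t ht
      rw [uIcc_of_le hk0.le] at ht
      simp only
      rw [abs_of_nonneg ht.1, max_eq_left]
      nlinarith [ht.2]
    have h2 : ∫ t in κ⁻¹..π, max (1 - κ * |t|) 0 = ∫ t in κ⁻¹..π, (0:ℝ) := by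
      apply intervalIntegral.integral_congr
      intro t ht
      rw [uIcc_of_le (by linarith)] at ht
      simp only
      rw [abs_of_nonneg (by linarith [ht.1]), max_eq_right]
      nlinarith [ht.1]
    rw [h1, h2, intervalIntegral.integral_sub (by simp)
      (by apply Continuous.intervalIntegrable; fun_prop), intervalIntegral.integral_const_mul]
    simp only [intervalIntegral.integral_const, integral_id, intervalIntegral.integral_zero]
    simp
    field_simp
    ring
  have n : ∫ t in (-π)..0, max (1 - κ * |t|) 0 = κ⁻¹ / 2 := by
    rw [← p]
    have := intervalIntegral.integral_comp_neg (a := 0) (b := π) (fun t : ℝ => max (1 - κ * |t|) 0)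
    simp only [abs_neg, neg_zero] at this
    exact this.symm
  rw [← intervalIntegral.integral_add_adjacent_intervals (I (-π) 0) (I 0 π), p, n]
  ring

lemma tri_lam (κ : ℝ) (hκ : 1 ≤ κ) (y : 𝕋) :
    ∫ z, max (1 - κ * dist y z) 0 ∂lam = (2 * π)⁻¹ * κ⁻¹ := by
  rw [← int_lam_shift _ y, int_lam, ← tri_int κ hκ]
  congr 1
  apply circ_congr
  intro x hx
  rw [dist_eq_norm, sub_add_cancel_left, norm_neg, norm_coe_small (abs_le.2 ⟨hx.1.le, hx.2⟩)]

instance : IsFiniteMeasure lam := by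
  unfold lam
  constructor
  rw [Measure.smul_apply, smul_eq_mul]
  exact ENNReal.mul_lt_top (by simp [pi_pos]) (measure_lt_top _ _)

lemma tri_cont (κ : ℝ) : Continuous fun p : 𝕋 × 𝕋 => max (1 - κ * dist p.1 p.2) 0 := by
  fun_prop

lemma tri_bd (κ : ℝ) (hκ : 1 ≤ κ) (y z : 𝕋) : max (1 - κ * dist y z) 0 ≤ 1 := by
  apply max_le _ (by norm_num)
  have : 0 ≤ κ * dist y z := by positivity
  linarith

lemma tri_integrable (ν : Measure 𝕋) [IsProbabilityMeasure ν] (κ : ℝ) (hκ : 1 ≤ κ) (z : 𝕋) :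
    Integrable (fun y => max (1 - κ * dist y z) 0) ν := by
  refine Integrable.of_bound (C := 1) ?_ (.of_forall fun y => ?_)
  · have : Continuous fun y : 𝕋 => max (1 - κ * dist y z) 0 := by fun_prop
    exact this.aestronglyMeasurable
  · rw [Real.norm_eq_abs, abs_of_nonneg (le_max_right _ _)]
    exact tri_bd κ hκ y z

lemma gd_nuk (ν : Measure 𝕋) [IsProbabilityMeasure ν] (κ : ℝ) (hκ : 1 ≤ κ) :
    GD (fun x : ℝ => nuk ν κ (x : 𝕋)) κ := by
  have hpi := pi_pos
  have hk : 0 < κ := by linarith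
  have lip : ∀ x y : ℝ, |nuk ν κ (x : 𝕋) - nuk ν κ (y : 𝕋)| ≤ 2 * π * κ ^ 2 * |x - y| := by
    intro x y
    have hd : dist (x : 𝕋) (y : 𝕋) ≤ |x - y| := by
      rw [dist_eq_norm, ← AddCircle.coe_sub]
      exact QuotientAddGroup.norm_mk_le_norm
    rw [nuk, nuk, ← mul_sub, ← integral_sub (tri_integrable ν κ hκ _) (tri_integrable ν κ hκ _),
      abs_mul, abs_of_pos (by positivity)]
    have : |∫ w, (max (1 - κ * dist w (x : 𝕋)) 0 - max (1 - κ * dist w (y : 𝕋)) 0) ∂ν|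
        ≤ κ * |x - y| := by
      have := norm_integral_le_of_norm_le_const (μ := ν) (C := κ * |x - y|)
        (f := fun w => max (1 - κ * dist w (x : 𝕋)) 0 - max (1 - κ * dist w (y : 𝕋)) 0)
        (.of_forall fun w => by
          rw [Real.norm_eq_abs]
          refine (abs_max_sub_max_le_abs _ _ _).trans ?_
          rw [show 1 - κ * dist w (x : 𝕋) - (1 - κ * dist w (y : 𝕋))
            = κ * (dist w (y : 𝕋) - dist w (x : 𝕋)) by ring, abs_mul, abs_of_pos hk]
          refine mul_le_mul_of_nonneg_left ?_ hk.le
          rw [abs_sub_comm]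
          refine le_trans ?_ hd
          rw [dist_comm w, dist_comm w]
          exact abs_dist_sub_le _ _ _)
      simpa using this
    calc _ ≤ 2 * π * κ * (κ * |x - y|) := by gcongr
      _ = _ := by ring
  refine ⟨?_, ?_, lip, ?_, ?_, ?_, hκ⟩
  · intro x
    simp only
    rw [AddCircle.coe_add_period]
  · have : LipschitzWith (Real.toNNReal (2 * π * κ ^ 2)) (fun x : ℝ => nuk ν κ (x : 𝕋)) := by
      apply LipschitzWith.of_dist_le_mul
      intro x y
      rw [Real.coe_toNNReal _ (by positivity)]
      exact lip x y
    exact this.continuous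
  · intro x
    exact mul_nonneg (by positivity) (integral_nonneg fun y => le_max_right _ _)
  · intro x
    have : ∫ y, max (1 - κ * dist y (x : 𝕋)) 0 ∂ν ≤ ∫ y, (1 : ℝ) ∂ν :=
      integral_mono (tri_integrable ν κ hκ _) (integrable_const _) fun y => tri_bd κ hκ y _
    simp only [integral_const, probReal_univ, smul_eq_mul, mul_one] at this
    calc nuk ν κ (x : 𝕋) ≤ 2 * π * κ * 1 := by
          rw [nuk]; gcongr
      _ = _ := by ring
  · have h1 := int_lam (nuk ν κ)
    have h2 : ∫ z, nuk ν κ z ∂lam = 1 := by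
      simp only [nuk]
      rw [integral_const_mul, integral_integral_swap]
      · simp only [tri_lam κ hκ, integral_const, probReal_univ, smul_eq_mul]
        field_simp
      · refine Integrable.of_bound (C := 1) ?_ (.of_forall fun p => ?_)
        · have : Continuous fun p : 𝕋 × 𝕋 => max (1 - κ * dist p.2 p.1) 0 := by fun_prop
          exact this.aestronglyMeasurable
        · simp only [uncurry]
          rw [Real.norm_eq_abs, abs_of_nonneg (le_max_right _ _)]
          exact tri_bd κ hκ _ _
    rw [h2] at h1
    field_simp at h1
    linarith

lemma U2k_coe (ν : Measure 𝕋) (κ : ℝ) (x : ℝ) :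
    U2k ν κ (x : 𝕋) = uu (fun x : ℝ => nuk ν κ (x : 𝕋)) x := by
  rw [U2k, ← int_lam_shift _ (x : 𝕋), int_lam, uu]
  congr 1
  apply circ_congr
  intro t ht
  rw [dist_eq_norm, sub_add_cancel_left, norm_neg, norm_coe_small (abs_le.2 ⟨ht.1.le, ht.2⟩), sq_abs,
    AddCircle.coe_add]

lemma gen_coe (ν : Measure 𝕋) (κ α β : ℝ) (φ : ℝ → ℝ) (x : ℝ) (hx : x ∈ Ioc (-π) π) :
    gen2k ν κ α β φ (x : 𝕋) = (1 / 2) * deriv (deriv φ) x + α⁻¹ * ((2 * π)⁻¹ *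
        ∫ t in (-π)..π, (φ (x + α * β * t) - φ x) * nuk ν κ ((x + t : ℝ) : 𝕋)) := by
  rw [gen2k, rep_coe hx, ← int_lam_shift _ (x : 𝕋), int_lam]
  congr 3
  apply circ_congr
  intro t ht
  rw [add_sub_cancel_left, rep_coe ht, AddCircle.coe_add]

lemma int_gibbs (ν : Measure 𝕋) [IsProbabilityMeasure ν] (κ β : ℝ) (hκ : 1 ≤ κ) (f : 𝕋 → ℝ) :
    ∫ z, f z ∂(gibbs2k ν κ β) = (Z2k ν κ β)⁻¹ * ((2 * π)⁻¹ *
      ∫ x in (-π)..π, Real.exp (-β * uu (fun x : ℝ => nuk ν κ (x : 𝕋)) x) * f (x : 𝕋)) := by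
  have hU : Measurable (U2k ν κ) := by
    have : U2k ν κ = fun z => uu (fun x : ℝ => nuk ν κ (x : 𝕋)) (rep z) := by
      funext z
      rw [← U2k_coe, coe_rep]
    rw [this]
    exact (gd_nuk ν κ hκ).uu_cont.measurable.comp rep_meas
  have hZ : 0 ≤ Z2k ν κ β := integral_nonneg fun x => (Real.exp_pos _).le
  rw [gibbs2k, integral_withDensity_eq_integral_toReal_smul (by fun_prop)
    (.of_forall fun _ => ENNReal.ofReal_lt_top), int_lam,
    ← intervalIntegral.integral_const_mul, ← intervalIntegral.integral_const_mul,
    ← intervalIntegral.integral_const_mul]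
  congr 1
  funext x
  rw [ENNReal.toReal_ofReal (by positivity), U2k_coe, smul_eq_mul]
  ring

end helpers

/-- Proposition `mbl4`: for an arbitrary probability measure `ν` on the circle,
there is a universal constant `C₁ > 0` such that for all `β ≥ 1`, `κ ≥ 1` and
`0 < α < min((2β)⁻¹, (β³(β+κ))^{-1/2})`, the adjoint of `L_{α,β,κ}` in `L²(μ_{β,κ})` applied
to `𝟙` (i.e. the function `h` representing `φ ↦ ∫ L_{α,β,κ}φ dμ_{β,κ}`) satisfies
`ess sup |h| ≤ C₁ αβ²(β² + κ²)`. -/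
theorem adjoint_one_estimate_regularized :
    ∃ C₁ : ℝ, 0 < C₁ ∧
      ∀ (ν : Measure 𝕋), IsProbabilityMeasure ν →
      ∀ (β κ α : ℝ), 1 ≤ β → 1 ≤ κ →
        0 < α → α < min ((2 * β)⁻¹) ((β ^ 3 * (β + κ)) ^ (-(1 / 2) : ℝ)) →
      ∃ h : 𝕋 → ℝ, Measurable h ∧
        (∀ᵐ x ∂lam, |h x| ≤ C₁ * (α * β ^ 2 * (β ^ 2 + κ ^ 2))) ∧
        ∀ φ : ℝ → ℝ, Function.Periodic φ (2 * π) → ContDiff ℝ 2 φ →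
          ∫ z, gen2k ν κ α β φ z ∂(gibbs2k ν κ β)
            = ∫ z, φ (rep z) * h z ∂(gibbs2k ν κ β) := by
  refine ⟨200000 * Real.exp 150, by positivity, ?_⟩
  intro ν hν β κ α hβ hκ hα hlt
  have G := gd_nuk ν κ hκ
  obtain ⟨l1, l2⟩ := lt_min_iff.1 hlt
  have a2 : α * β < 1 / 2 := by
    have := mul_lt_mul_of_pos_right l1 (by linarith : 0 < β)
    refine this.trans_eq ?_
    field_simp
  have hpos : 0 < β ^ 3 * (β + κ) := by positivity
  have c : α ^ 2 * (β ^ 3 * (β + κ)) ≤ 1 := by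
    have : α ^ 2 ≤ ((β ^ 3 * (β + κ)) ^ (-(1 / 2) : ℝ)) ^ 2 := by gcongr
    rw [← Real.rpow_natCast (_ ^ (-(1 / 2) : ℝ)), ← Real.rpow_mul hpos.le] at this
    norm_num at this
    rw [Real.rpow_neg_one, ← one_div, le_div_iff₀ hpos] at this
    exact this
  refine ⟨fun z => HH (fun x : ℝ => nuk ν κ (x : 𝕋)) α β (rep z),
    (G.HH_cont α β).measurable.comp rep_meas,
    .of_forall fun z => G.Hbound _ α β hα hβ a2 c, ?_⟩
  intro φ hφ h2
  rw [int_gibbs ν κ β hκ, int_gibbs ν κ β hκ]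
  congr 2
  have I := G.identity α β φ hφ h2
  refine Eq.trans (circ_congr fun x hx => ?_) (I.trans (circ_congr fun x hx => ?_))
  · rw [gen_coe ν κ α β φ x hx]
  · simp only [rep_coe hx]
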